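/- arXiv:2507.22389 — 3 statements merged into one kernel-verified Lean document; each statement's English description precedes it below -/
import Mathlib

section
/- Let g : ℝⁿ → ℝⁿ be continuously differentiable, let S ⊆ ℝⁿ be measurable, and let ν be a probability measure on ℝⁿ given by a density ρ with respect to Lebesgue measure, where ρ > 0 almost everywhere on S and ρ = 0 almost everywhere on the complement of S. Then for every measurable set F with F ⊆ g(S) (the image of S under g) and vol(F) > 0, one has ν(g⁻¹(F)) > 0; equivalently, the pushforward measure (g∗ν)(F) > 0. -/
open MeasureTheory ENNReal

/-- If `g : ℝⁿ → ℝⁿ` is `C¹` and `ν` is a probability measure with density `ρ` w.r.t.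
Lebesgue measure, where `ρ > 0` a.e. on `S` and `ρ = 0` a.e. off `S`, then every measurable
set `F ⊆ g '' S` of positive Lebesgue measure satisfies `ν (g ⁻¹' F) > 0`, i.e. the
pushforward measure of `F` is positive. -/
theorem stmt_2 (n : ℕ) (g : (Fin n → ℝ) → (Fin n → ℝ)) (hg : ContDiff ℝ 1 g)
    (S : Set (Fin n → ℝ)) (hS : MeasurableSet S)
    (ρ : (Fin n → ℝ) → ℝ≥0∞) (hρ : Measurable ρ)
    (ν : Measure (Fin n → ℝ)) [IsProbabilityMeasure ν]
    (hν : ν = volume.withDensity ρ)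
    (hρpos : ∀ᵐ x ∂volume, x ∈ S → 0 < ρ x)
    (hρzero : ∀ᵐ x ∂volume, x ∉ S → ρ x = 0)
    (F : Set (Fin n → ℝ)) (hF : MeasurableSet F) (hFS : F ⊆ g '' S)
    (hFvol : 0 < volume F) :
    0 < ν (g ⁻¹' F) := by
  rw [pos_iff_ne_zero]
  intro h0
  rw [hν, withDensity_apply_eq_zero hρ] at h0
  have hnull : volume (g ⁻¹' F ∩ S) = 0 := by
    have h1 : volume {x | ¬ (x ∈ S → 0 < ρ x)} = 0 := hρpos
    refine measure_mono_null ?_ (measure_union_null h0 h1)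
    rintro x ⟨hxF, hxS⟩
    by_cases hx : ρ x = 0
    · right
      intro h
      exact (h hxS).ne' hx
    · left
      exact ⟨hx, hxF⟩
  have himg : volume (g '' (g ⁻¹' F ∩ S)) = 0 :=
    addHaar_image_eq_zero_of_differentiableOn_of_addHaar_eq_zero volume
      (hg.differentiable (by norm_num)).differentiableOn hnull
  refine hFvol.ne' (measure_mono_null ?_ himg)
  intro y hy
  obtain ⟨x, hxS, rfl⟩ := hFS hy
  exact ⟨x, ⟨hy, hxS⟩, rfl⟩
end

section
/- (Equivalence of deterministic and probabilistic forward reachable sets, same-dimension form.) Let g : ℝⁿ → ℝⁿ be continuously differentiable, let S ⊆ ℝⁿ be measurable with g(S) measurable and vol(g(S)) < ∞, and let ν be a probability measure on ℝⁿ given by a density ρ with respect to Lebesgue measure, where ρ > 0 almost everywhere on S and ρ = 0 almost everywhere on the complement of S. Let μ = g∗ν be the pushforward of ν under g, and suppose ω* is a measurable set with μ(ω*) = 1 having minimal Lebesgue measure among all measurable sets of full μ-measure (for every measurable ω' with μ(ω') = 1, vol(ω*) ≤ vol(ω')). Then ω* equals the deterministic forward reachable set g(S) almost everywhere: vol((ω*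 \ g(S)) ∪ (g(S) \ ω*)) = 0. -/
open MeasureTheory ENNReal

/-- Equivalence of deterministic and probabilistic forward reachable sets
(same-dimension form): a minimal-volume set `W` of full measure under the pushforward
`μ = g∗ν` coincides almost everywhere with the deterministic reachable set `g '' S`. -/
theorem stmt_3 (n : ℕ) (g : (Fin n → ℝ) → (Fin n → ℝ)) (hg : ContDiff ℝ 1 g)
    (S : Set (Fin n → ℝ)) (hS : MeasurableSet S)
    (hgS : MeasurableSet (g '' S)) (hgSfin : volume (g '' S) < ⊤)
    (ρ : (Fin n → ℝ) → ℝ≥0∞) (hρ : Measurable ρ)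
    (ν : Measure (Fin n → ℝ)) [IsProbabilityMeasure ν]
    (hν : ν = volume.withDensity ρ)
    (hρpos : ∀ᵐ x ∂volume, x ∈ S → 0 < ρ x)
    (hρzero : ∀ᵐ x ∂volume, x ∉ S → ρ x = 0)
    (μ : Measure (Fin n → ℝ)) (hμ : μ = Measure.map g ν)
    (W : Set (Fin n → ℝ)) (hW : MeasurableSet W) (hWfull : μ W = 1)
    (hWmin : ∀ W' : Set (Fin n → ℝ), MeasurableSet W' → μ W' = 1 → volume W ≤ volume W') :
    volume ((W \ g '' S) ∪ (g '' S \ W)) = 0 := by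
  have hgm : Measurable g := hg.continuous.measurable
  haveI : IsProbabilityMeasure μ := by
    rw [hμ]; exact Measure.isProbabilityMeasure_map hgm.aemeasurable
  have hνS : ∀ᵐ x ∂ν, x ∈ S := by
    rw [hν, ae_withDensity_iff hρ]
    filter_upwards [hρzero] with x hx h
    by_contra hc
    exact h (hx hc)
  have hμS : ∀ᵐ y ∂μ, y ∈ g '' S := by
    rw [hμ]
    refine (ae_map_iff hgm.aemeasurable hgS).2 ?_
    filter_upwards [hνS] with x hx using Set.mem_image_of_mem g hx
  have hμW : ∀ᵐ y ∂μ, y ∈ W := (mem_ae_iff_prob_eq_one hW).2 hWfull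
  have h1 : volume (g '' S \ W) = 0 := by
    have h2 : volume (S ∩ g ⁻¹' Wᶜ) = 0 := by
      have h3 : ∀ᵐ x ∂ν, g x ∈ W := by
        rw [hμ] at hμW
        exact (ae_map_iff hgm.aemeasurable hW).1 hμW
      rw [hν, ae_withDensity_iff hρ] at h3
      rw [measure_eq_zero_iff_ae_notMem]
      filter_upwards [h3, hρpos] with x hx hp hxS
      exact hxS.2 (hx (hp hxS.1).ne')
    have h4 := addHaar_image_eq_zero_of_differentiableOn_of_addHaar_eq_zero volume
      (f := g) (hg.differentiable one_ne_zero).differentiableOn h2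
    rw [Set.image_inter_preimage] at h4
    exact h4
  have h5 : μ (W ∩ g '' S) = 1 :=
    (mem_ae_iff_prob_eq_one (hW.inter hgS)).1 (hμW.and hμS)
  have h6 := hWmin _ (hW.inter hgS) h5
  have hfin : volume (W ∩ g '' S) ≠ ⊤ :=
    ((measure_mono Set.inter_subset_right).trans_lt hgSfin).ne
  have h7 : volume (W \ g '' S) = 0 := by
    rw [← measure_inter_add_diff W hgS] at h6
    have h8 : volume (W ∩ g '' S) + volume (W \ g '' S) ≤ volume (W ∩ g '' S) + 0 := by
      simpa using h6
    exact le_antisymm ((ENNReal.add_le_add_iff_left hfin).1 h8) bot_le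
  exact measure_union_null h7 h1
end

section
/- (Convex optimization for FRS extraction.) Let K ∈ ℕ; for i = 1, …, K let x̄ᵢ ∈ ℝ², let Σᵢ be a symmetric positive-definite 2×2 real matrix with eigenvalues λᵢ₁, λᵢ₂, let Nᵢ be the Gaussian measure on ℝ² with density (2π)⁻¹ (det Σᵢ)^(−1/2) exp(−(x − x̄ᵢ)ᵀ Σᵢ⁻¹ (x − x̄ᵢ)/2) with respect to Lebesgue measure, and let Eᵢ(cᵢ) = {x ∈ ℝ² : (x − x̄ᵢ)ᵀ Σᵢ⁻¹ (x − x̄ᵢ) ≤ cᵢ}. Let p₁, …, p_K ≥ 0 with Σᵢ pᵢ = 1 and τ ∈ (0,1). Then a vector c ∈ ℝᴷ with cᵢ ≥ 0 for all i minimizes Σᵢ vol(Eᵢ(cᵢ)) subject to Σᵢ pᵢ Nᵢ(Eᵢ(cᵢ)) ≥ τ and cᵢ ≥ 0 for all i, if and only if c minimizes the linear objective Σᵢ π √(λᵢ₁ λᵢ₂) cᵢ subject to Σᵢ pᵢ (1 − exp(−cᵢ/2)) ≥ τ and cᵢ ≥ 0 for all i; moreover the latter problem is a convex program: its objective is linear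 and its feasible set {c ∈ ℝᴷ : cᵢ ≥ 0 for all i, Σᵢ pᵢ (1 − exp(−cᵢ/2)) ≥ τ} is convex. -/
open MeasureTheory Matrix

lemma disc_vol (c : ℝ) (hc : 0 ≤ c) :
    volume {y : Fin 2 → ℝ | y ⬝ᵥ y ≤ c} = ENNReal.ofReal (Real.pi * c) := by
  have h := (EuclideanSpace.volume_preserving_symm_measurableEquiv_toLp (Fin 2)).symm.measure_preimage_equiv
    (Metric.closedBall (0 : EuclideanSpace ℝ (Fin 2)) (Real.sqrt c))
  rw [EuclideanSpace.volume_closedBall_fin_two] at h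
  have h2 : ENNReal.ofReal (Real.sqrt c) ^ 2 * ENNReal.ofReal Real.pi = ENNReal.ofReal (Real.pi * c) := by
    rw [← ENNReal.ofReal_pow (Real.sqrt_nonneg _), Real.sq_sqrt hc, ← ENNReal.ofReal_mul hc, mul_comm]
  rw [← h2, ← h]
  congr 1
  ext y
  simp only [Set.mem_ofPred_eq, Set.mem_preimage, mem_closedBall_zero_iff]
  rw [EuclideanSpace.norm_eq, Real.sqrt_le_sqrt_iff hc]
  simp [dotProduct, Fin.sum_univ_two, pow_two]

lemma ell_vol (S : Matrix (Fin 2) (Fin 2) ℝ) (hS : S.PosDef) (m : Fin 2 → ℝ) (c : ℝ) (hc : 0 ≤ c) :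
    volume {x : Fin 2 → ℝ | (x - m) ⬝ᵥ S⁻¹.mulVec (x - m) ≤ c}
      = ENNReal.ofReal (Real.pi * Real.sqrt S.det * c) := by
  obtain ⟨B, hB⟩ : ∃ B : Matrix (Fin 2) (Fin 2) ℝ, S⁻¹ = Bᴴ * B := by
    open scoped MatrixOrder Matrix.Norms.L2Operator in
    exact CStarAlgebra.nonneg_iff_eq_star_mul_self.mp hS.inv.posSemidef.nonneg
  have hd := hS.det_pos
  have hB2 : B.det ^ 2 = S.det⁻¹ := by
    have := congrArg Matrix.det hB
    rw [Matrix.det_nonsing_inv, Matrix.det_mul, Matrix.det_conjTranspose] at this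
    simp at this
    rw [this]; ring
  have hB0 : B.det ≠ 0 := by
    intro h; rw [h] at hB2
    have := inv_pos.2 hd
    simp at hB2; linarith
  have hset : {x : Fin 2 → ℝ | (x - m) ⬝ᵥ S⁻¹.mulVec (x - m) ≤ c}
      = (fun x => x + (-m)) ⁻¹' (Matrix.toLin' B ⁻¹' {y : Fin 2 → ℝ | y ⬝ᵥ y ≤ c}) := by
    ext x
    simp only [Set.mem_ofPred_eq, Set.mem_preimage, Matrix.toLin'_apply, ← sub_eq_add_neg, hB]
    rw [← Matrix.mulVec_mulVec, Matrix.dotProduct_mulVec, Matrix.conjTranspose_eq_transpose_of_trivial,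
      Matrix.vecMul_transpose]
  rw [hset, measure_preimage_add_right, Measure.addHaar_preimage_linearMap _ (by simpa using hB0),
    disc_vol c hc, LinearMap.det_toLin', ← ENNReal.ofReal_mul (abs_nonneg _)]
  congr 1
  have : |B.det⁻¹| = Real.sqrt S.det := by
    rw [← Real.sqrt_sq_eq_abs, inv_pow, hB2, inv_inv]
  rw [this]; ring

lemma ell_gauss (S : Matrix (Fin 2) (Fin 2) ℝ) (hS : S.PosDef) (m : Fin 2 → ℝ) (c : ℝ) (hc : 0 ≤ c) :
    (volume.withDensity (fun x => ENNReal.ofReal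
      ((2 * Real.pi)⁻¹ * (Real.sqrt S.det)⁻¹ *
        Real.exp (-((x - m) ⬝ᵥ S⁻¹.mulVec (x - m)) / 2)))
      {x : Fin 2 → ℝ | (x - m) ⬝ᵥ S⁻¹.mulVec (x - m) ≤ c}).toReal
      = 1 - Real.exp (-c / 2) := by
  set q : (Fin 2 → ℝ) → ℝ := fun x => (x - m) ⬝ᵥ S⁻¹.mulVec (x - m) with hq
  have hqm : Measurable q := by
    apply Continuous.measurable
    simp only [hq, dotProduct, Matrix.mulVec]
    fun_prop
  have hsd := Real.sqrt_pos.2 hS.det_pos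
  set k := Real.pi * Real.sqrt S.det with hk
  have hkp : 0 < k := by positivity
  have hvol : ∀ d, 0 ≤ d → volume (q ⁻¹' Set.Iic d) = ENNReal.ofReal (k * d) :=
    fun d hd => ell_vol S hS m d hd
  have hq0 : ∀ x, 0 ≤ q x := fun x => by
    have := hS.inv.posSemidef.dotProduct_mulVec_nonneg (x - m)
    rwa [star_trivial] at this
  have hmap : (volume.map q).restrict (Set.Iic c)
      = ENNReal.ofReal k • volume.restrict (Set.Ioc 0 c) := by
    have : IsFiniteMeasure ((volume.map q).restrict (Set.Iic c)) := by
      constructor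
      rw [Measure.restrict_apply_univ, Measure.map_apply hqm measurableSet_Iic, hvol c hc]
      exact ENNReal.ofReal_lt_top
    apply Measure.ext_of_Iic
    intro a
    rw [Measure.restrict_apply measurableSet_Iic, Set.Iic_inter_Iic, Measure.map_apply hqm measurableSet_Iic,
      Measure.smul_apply, Measure.restrict_apply measurableSet_Iic, Set.inter_comm, Set.Ioc_inter_Iic,
      Real.volume_Ioc, smul_eq_mul, ← ENNReal.ofReal_mul hkp.le, sub_zero, min_comm]
    rcases le_or_gt 0 (min c a) with h | h
    · exact hvol _ h
    · rw [ENNReal.ofReal_of_nonpos (mul_nonpos_of_nonneg_of_nonpos hkp.le h.le)]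
      have : q ⁻¹' Set.Iic (min c a) = ∅ := by
        ext x
        simp only [Set.mem_preimage, Set.mem_Iic, Set.mem_empty_iff_false, iff_false, not_le]
        exact h.trans_le (hq0 x)
      rw [this, measure_empty]
  have h1 : (volume.withDensity (fun x => ENNReal.ofReal
      ((2 * Real.pi)⁻¹ * (Real.sqrt S.det)⁻¹ * Real.exp (-(q x) / 2)))) (q ⁻¹' Set.Iic c)
      = ENNReal.ofReal (1 - Real.exp (-c/2)) := by
    rw [withDensity_apply _ (hqm measurableSet_Iic)]
    have hg : Measurable (fun t : ℝ => ENNReal.ofReal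
      ((2 * Real.pi)⁻¹ * (Real.sqrt S.det)⁻¹ * Real.exp (-t / 2))) := by fun_prop
    rw [← setLIntegral_map measurableSet_Iic hg hqm, hmap, lintegral_smul_measure, smul_eq_mul,
      ← ofReal_integral_eq_lintegral_ofReal, ← ENNReal.ofReal_mul hkp.le, integral_const_mul,
      ← intervalIntegral.integral_of_le hc]
    · congr 1
      have : ∫ t in (0:ℝ)..c, Real.exp (-t/2) = 2 * (1 - Real.exp (-c/2)) := by
        rw [intervalIntegral.integral_eq_sub_of_hasDerivAt (f := fun t => -2 * Real.exp (-t/2))]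
        · simp; ring
        · intro x _
          have h0 : HasDerivAt (fun t : ℝ => -t / 2) (-1 / 2) x :=
            (hasDerivAt_id' x).neg.div_const 2
          have h1 := h0.exp.const_mul (-2)
          have h2 : -2 * (Real.exp (-x / 2) * (-1 / 2)) = Real.exp (-x / 2) := by ring
          rw [h2] at h1
          exact h1
        · exact Continuous.intervalIntegrable (by fun_prop) _ _
      rw [this, hk]; field_simp
    · exact (Continuous.integrableOn_Ioc (by fun_prop))
    · exact ae_of_all _ fun t => by positivity
  have h2 : 0 ≤ 1 - Real.exp (-c/2) := by
    have : Real.exp (-c/2) ≤ 1 := Real.exp_le_one_iff.2 (by linarith)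
    linarith
  exact (congrArg ENNReal.toReal h1).trans (ENNReal.toReal_ofReal h2)

/-- Convex optimization for FRS extraction: `c` minimizes the total volume of the
Mahalanobis sublevel sets subject to the GMM coverage constraint iff it minimizes the
linear objective `Σᵢ π √(λᵢ₁ λᵢ₂) cᵢ` subject to `Σᵢ pᵢ (1 − exp(−cᵢ/2)) ≥ τ` and
`cᵢ ≥ 0`; moreover, the latter problem has a linear objective and a convex feasible set. -/
theorem stmt_8 (K : ℕ) (xbar : Fin K → (Fin 2 → ℝ)) (S : Fin K → Matrix (Fin 2) (Fin 2) ℝ)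
    (hS : ∀ i, (S i).PosDef)
    (N : Fin K → Measure (Fin 2 → ℝ))
    (hN : ∀ i, N i = volume.withDensity (fun x => ENNReal.ofReal
      ((2 * Real.pi)⁻¹ * (Real.sqrt (S i).det)⁻¹ *
        Real.exp (-((x - xbar i) ⬝ᵥ (S i)⁻¹.mulVec (x - xbar i)) / 2))))
    (E : Fin K → ℝ → Set (Fin 2 → ℝ))
    (hE : ∀ i c, E i c = {x : Fin 2 → ℝ | (x - xbar i) ⬝ᵥ (S i)⁻¹.mulVec (x - xbar i) ≤ c})
    (p : Fin K → ℝ) (hp : ∀ i, 0 ≤ p i) (hp1 : ∑ i, p i = 1)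
    (τ : ℝ) (hτ : τ ∈ Set.Ioo (0 : ℝ) 1)
    (c : Fin K → ℝ) :
    (((∀ i, 0 ≤ c i) ∧ τ ≤ ∑ i, p i * ((N i) (E i (c i))).toReal ∧
        ∀ c' : Fin K → ℝ,
          ((∀ i, 0 ≤ c' i) ∧ τ ≤ ∑ i, p i * ((N i) (E i (c' i))).toReal) →
            ∑ i, volume (E i (c i)) ≤ ∑ i, volume (E i (c' i))) ↔
      ((∀ i, 0 ≤ c i) ∧ τ ≤ ∑ i, p i * (1 - Real.exp (-(c i) / 2)) ∧
        ∀ c' : Fin K → ℝ,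
          ((∀ i, 0 ≤ c' i) ∧ τ ≤ ∑ i, p i * (1 - Real.exp (-(c' i) / 2))) →
            ∑ i, Real.pi *
                Real.sqrt ((hS i).isHermitian.eigenvalues 0 * (hS i).isHermitian.eigenvalues 1) *
                  c i ≤
              ∑ i, Real.pi *
                Real.sqrt ((hS i).isHermitian.eigenvalues 0 * (hS i).isHermitian.eigenvalues 1) *
                  c' i)) ∧
    IsLinearMap ℝ (fun c : Fin K → ℝ =>
      ∑ i, Real.pi *
        Real.sqrt ((hS i).isHermitian.eigenvalues 0 * (hS i).isHermitian.eigenvalues 1) * c i) ∧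
    Convex ℝ {c : Fin K → ℝ |
      (∀ i, 0 ≤ c i) ∧ τ ≤ ∑ i, p i * (1 - Real.exp (-(c i) / 2))} := by
  have hdet : ∀ i, (hS i).isHermitian.eigenvalues 0 * (hS i).isHermitian.eigenvalues 1
      = (S i).det := fun i => by
    rw [(hS i).isHermitian.det_eq_prod_eigenvalues, Fin.prod_univ_two]
    simp
  simp only [hdet]
  have hG : ∀ d : Fin K → ℝ, (∀ i, 0 ≤ d i) →
      ∑ i, p i * ((N i) (E i (d i))).toReal = ∑ i, p i * (1 - Real.exp (-(d i) / 2)) := by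
    intro d hd
    refine Finset.sum_congr rfl fun i _ => ?_
    rw [hN, hE, ell_gauss (S i) (hS i) (xbar i) (d i) (hd i)]
  have hnn : ∀ d : Fin K → ℝ, (∀ i, 0 ≤ d i) → ∀ i,
      0 ≤ Real.pi * Real.sqrt (S i).det * d i := fun d hd i =>
    mul_nonneg (mul_nonneg Real.pi_pos.le (Real.sqrt_nonneg _)) (hd i)
  have hV : ∀ d : Fin K → ℝ, (∀ i, 0 ≤ d i) →
      ∑ i, volume (E i (d i)) = ENNReal.ofReal (∑ i, Real.pi * Real.sqrt (S i).det * d i) := by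
    intro d hd
    rw [ENNReal.ofReal_sum_of_nonneg fun i _ => hnn d hd i]
    refine Finset.sum_congr rfl fun i _ => ?_
    rw [hE, ell_vol (S i) (hS i) (xbar i) (d i) (hd i)]
  refine ⟨and_congr_right fun hc => ?_, ?_, ?_⟩
  · rw [hG c hc, hV c hc]
    refine and_congr_right fun _ => forall_congr' fun d => ?_
    rw [and_imp, and_imp]
    refine forall_congr' fun hd => ?_
    rw [hG d hd, hV d hd,
      ENNReal.ofReal_le_ofReal_iff (Finset.sum_nonneg fun i _ => hnn d hd i)]
  · constructor
    · intro x y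
      simp [mul_add, Finset.sum_add_distrib]
    · intro a x
      simp only [Pi.smul_apply, smul_eq_mul, Finset.mul_sum]
      exact Finset.sum_congr rfl fun i _ => by ring
  · intro x hx y hy a b ha hb hab
    obtain ⟨hx0, hx1⟩ := hx
    obtain ⟨hy0, hy1⟩ := hy
    refine ⟨fun i => add_nonneg (mul_nonneg ha (hx0 i)) (mul_nonneg hb (hy0 i)), ?_⟩
    have key : a * ∑ i, p i * (1 - Real.exp (-(x i) / 2)) +
        b * ∑ i, p i * (1 - Real.exp (-(y i) / 2))
        ≤ ∑ i, p i * (1 - Real.exp (-((a • x + b • y) i) / 2)) := by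
      rw [Finset.mul_sum, Finset.mul_sum, ← Finset.sum_add_distrib]
      refine Finset.sum_le_sum fun i _ => ?_
      have h := convexOn_exp.2 (Set.mem_univ (-(x i) / 2)) (Set.mem_univ (-(y i) / 2)) ha hb hab
      simp only [smul_eq_mul] at h
      have e : -((a • x + b • y) i) / 2 = a * (-(x i) / 2) + b * (-(y i) / 2) := by
        simp only [Pi.add_apply, Pi.smul_apply, smul_eq_mul]; ring
      rw [e]
      have h3 := mul_le_mul_of_nonneg_left h (hp i)
      have h4 : p i * a + p i * b = p i := by rw [← mul_add, hab, mul_one]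
      linarith
    have h5 := mul_le_mul_of_nonneg_left hx1 ha
    have h6 := mul_le_mul_of_nonneg_left hy1 hb
    have h7 : a * τ + b * τ = τ := by rw [← add_mul, hab, one_mul]
    linarith
end
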